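/- Let R be a commutative ring, n ≥ 3 odd, and g ∈ G_{n-1}(R). Then for every Suslin matrix S ∈ M_{2^{n-1}}(R), l(g·S·g*) = l(g·g*)·l(S). (Here g·g* = g·I·g* is a Suslin matrix since the identity matrix I = S_{n-1}((1,0,…,0),(1,0,…,0)) is a Suslin matrix.) -/

import Mathlib

open Matrix

noncomputable section

/-- Reindexing equivalence `Fin (2 ^ n) ⊕ Fin (2 ^ n) ≃ Fin (2 ^ (n + 1))`. -/
def pow2Equiv (n : ℕ) : Fin (2 ^ n) ⊕ Fin (2 ^ n) ≃ Fin (2 ^ (n + 1)) :=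
  finSumFinEquiv.trans (finCongr (by rw [pow_succ]; ring))

/-- The Suslin matrix `S_n(v, w)` of size `2 ^ n` associated to `v, w : Fin (n+1) → R`. -/
def sus (R : Type) [CommRing R] : (n : ℕ) → (Fin (n + 1) → R) → (Fin (n + 1) → R) →
    Matrix (Fin (2 ^ n)) (Fin (2 ^ n)) R
  | 0, v, _ => v 0 • 1
  | n + 1, v, w =>
      Matrix.reindex (pow2Equiv n) (pow2Equiv n)
        (Matrix.fromBlocks (v 0 • 1) (sus R n (v ∘ Fin.succ) (w ∘ Fin.succ))
          (-(sus R n (w ∘ Fin.succ) (v ∘ Fin.succ))ᵀ) (w 0 • 1))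

/-- The conjugate Suslin matrix `S̄_n(v, w) = S_n(w, v)ᵀ`. -/
def susBar (R : Type) [CommRing R] (n : ℕ) (v w : Fin (n + 1) → R) :
    Matrix (Fin (2 ^ n)) (Fin (2 ^ n)) R :=
  (sus R n w v)ᵀ

/-- Suslin's matrices `J_n`. -/
def Jmat (R : Type) [CommRing R] : (n : ℕ) → Matrix (Fin (2 ^ n)) (Fin (2 ^ n)) R
  | 0 => 1
  | n + 1 =>
      if Even (n + 1) then
        Matrix.reindex (pow2Equiv n) (pow2Equiv n)
          (Matrix.fromBlocks (Jmat R n) 0 0 (-(Jmat R n)))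
      else
        Matrix.reindex (pow2Equiv n) (pow2Equiv n)
          (Matrix.fromBlocks 0 (Jmat R n) (-(Jmat R n)) 0)

/-- The involution `M ↦ M* = J_n · Mᵀ · J_nᵀ`. -/
def invol (R : Type) [CommRing R] (n : ℕ) (M : Matrix (Fin (2 ^ n)) (Fin (2 ^ n)) R) :
    Matrix (Fin (2 ^ n)) (Fin (2 ^ n)) R :=
  Jmat R n * Mᵀ * (Jmat R n)ᵀ

/-- `φ(v, w) = [[0, S_n(v,w)], [S̄_n(v,w), 0]]` (note the shift: vectors in `R^{n+1}`,
matrices of size `2 ^ (n + 1)`). -/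
def phiMat (R : Type) [CommRing R] (n : ℕ) (v w : Fin (n + 1) → R) :
    Matrix (Fin (2 ^ (n + 1))) (Fin (2 ^ (n + 1))) R :=
  Matrix.reindex (pow2Equiv n) (pow2Equiv n)
    (Matrix.fromBlocks 0 (sus R n v w) (susBar R n v w) 0)

/-- The set of Suslin matrices of size `2 ^ m`. -/
def SuslinSet (R : Type) [CommRing R] (m : ℕ) : Set (Matrix (Fin (2 ^ m)) (Fin (2 ^ m)) R) :=
  {S | ∃ v w : Fin (m + 1) → R, S = sus R m v w}

/-- The image of the hyperbolic space `R^{m+1} ⊕ R^{m+1}` inside the Clifford algebra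
`M_{2^{m+1}}(R)`. -/
def PhiSet (R : Type) [CommRing R] (m : ℕ) :
    Set (Matrix (Fin (2 ^ (m + 1))) (Fin (2 ^ (m + 1))) R) :=
  {x | ∃ v w : Fin (m + 1) → R, x = phiMat R m v w}

/-- The block diagonal matrix `diag(g₁, g₂)`. -/
def diagBlock (R : Type) [CommRing R] (m : ℕ)
    (g₁ g₂ : Matrix (Fin (2 ^ m)) (Fin (2 ^ m)) R) :
    Matrix (Fin (2 ^ (m + 1))) (Fin (2 ^ (m + 1))) R :=
  Matrix.reindex (pow2Equiv m) (pow2Equiv m) (Matrix.fromBlocks g₁ 0 0 g₂)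

/-- `Spin_{2(m+1)}(R)`, as the set of pairs `(g₁, g₂)` such that `x = diag(g₁, g₂)`
satisfies `x · x* = 1` and conjugation by `x` maps the image of the hyperbolic space
onto itself. -/
def SpinPair (R : Type) [CommRing R] (m : ℕ) :
    Set (Matrix (Fin (2 ^ m)) (Fin (2 ^ m)) R × Matrix (Fin (2 ^ m)) (Fin (2 ^ m)) R) :=
  {p | IsUnit p.1 ∧ IsUnit p.2 ∧
    diagBlock R m p.1 p.2 * invol R (m + 1) (diagBlock R m p.1 p.2) = 1 ∧
    (fun y => diagBlock R m p.1 p.2 * y * (diagBlock R m p.1 p.2)⁻¹) '' PhiSet R m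
      = PhiSet R m}

/-- The group `G_m(R)` of `g ∈ GL_{2^m}(R)` such that `g · S · g*` is a Suslin matrix
for every Suslin matrix `S`. -/
def GSet (R : Type) [CommRing R] (m : ℕ) : Set (Matrix (Fin (2 ^ m)) (Fin (2 ^ m)) R) :=
  {g | IsUnit g ∧ ∀ S ∈ SuslinSet R m, g * S * invol R m g ∈ SuslinSet R m}

/-- The group `SG_m(R)` of `g ∈ G_m(R)` preserving the length `l(S(v,w)) = v ⬝ᵥ w`. -/
def SGSet (R : Type) [CommRing R] (m : ℕ) : Set (Matrix (Fin (2 ^ m)) (Fin (2 ^ m)) R) :=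
  {g | g ∈ GSet R m ∧ ∀ v w v' w' : Fin (m + 1) → R,
    g * sus R m v w * invol R m g = sus R m v' w' → v' ⬝ᵥ w' = v ⬝ᵥ w}

/-- The hyperbolic quadratic form `q(v, w) = v ⬝ᵥ w` on `R^n ⊕ R^n`. -/
def hypForm (R : Type) [CommRing R] (n : ℕ) :
    QuadraticForm R ((Fin n → R) × (Fin n → R)) :=
  LinearMap.BilinMap.toQuadraticMap
    (LinearMap.mk₂ R (fun x y => x.1 ⬝ᵥ y.2)
      (fun x x' y => by simp [add_dotProduct])
      (fun c x y => by simp [smul_dotProduct])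
      (fun x y y' => by simp [dotProduct_add])
      (fun x c y => by simp [dotProduct_smul]))

/-- `E_i = S_m(e_i, 0)`. -/
def Emat (R : Type) [CommRing R] (m : ℕ) (i : Fin (m + 1)) :
    Matrix (Fin (2 ^ m)) (Fin (2 ^ m)) R :=
  sus R m (Pi.single i 1) 0

/-- `F_i = S_m(0, e_i)`. -/
def Fmat (R : Type) [CommRing R] (m : ℕ) (i : Fin (m + 1)) :
    Matrix (Fin (2 ^ m)) (Fin (2 ^ m)) R :=
  sus R m 0 (Pi.single i 1)


theorem sus_add (R : Type) [CommRing R] (n : ℕ) (v w p q : Fin (n + 1) → R) :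
    sus R n (v + p) (w + q) = sus R n v w + sus R n p q := by
  induction n with
  | zero => simp [sus, add_smul]
  | succ n ih =>
    have h1 := ih (v ∘ Fin.succ) (w ∘ Fin.succ) (p ∘ Fin.succ) (q ∘ Fin.succ)
    have h2 := ih (w ∘ Fin.succ) (v ∘ Fin.succ) (q ∘ Fin.succ) (p ∘ Fin.succ)
    have e1 : (v + p) ∘ Fin.succ = v ∘ Fin.succ + p ∘ Fin.succ := rfl
    have e2 : (w + q) ∘ Fin.succ = w ∘ Fin.succ + q ∘ Fin.succ := rfl
    simp only [sus, e1, e2, h1, h2]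
    ext i j
    obtain ⟨i, rfl⟩ := (pow2Equiv n).surjective i
    obtain ⟨j, rfl⟩ := (pow2Equiv n).surjective j
    rcases i with i | i <;> rcases j with j | j <;> simp [add_mul] <;> ring

theorem sus_bar_mul (R : Type) [CommRing R] (n : ℕ) (v w : Fin (n + 1) → R) :
    (sus R n w v)ᵀ * sus R n v w = (v ⬝ᵥ w) • 1 ∧
    sus R n v w * (sus R n w v)ᵀ = (v ⬝ᵥ w) • 1 := by
  induction n with
  | zero => constructor <;> simp [sus, dotProduct, smul_smul, mul_comm]
  | succ n ih =>
    have h1 := ih (v ∘ Fin.succ) (w ∘ Fin.succ)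
    have h2 := ih (w ∘ Fin.succ) (v ∘ Fin.succ)
    have e : v ⬝ᵥ w = v 0 * w 0 + (v ∘ Fin.succ) ⬝ᵥ (w ∘ Fin.succ) := by
      simp [dotProduct, Fin.sum_univ_succ]
    have e' : (w ∘ Fin.succ) ⬝ᵥ (v ∘ Fin.succ) = (v ∘ Fin.succ) ⬝ᵥ (w ∘ Fin.succ) :=
      dotProduct_comm _ _
    rw [e'] at h2
    have hone (r : R) : r • (1 : Matrix (Fin (2 ^ (n + 1))) (Fin (2 ^ (n + 1))) R)
        = (Matrix.fromBlocks (r • 1) 0 0 (r • 1)).submatrix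
          (pow2Equiv n).symm (pow2Equiv n).symm := by
      have := Matrix.fromBlocks_smul r (1 : Matrix (Fin (2 ^ n)) (Fin (2 ^ n)) R) 0 0
        (1 : Matrix (Fin (2 ^ n)) (Fin (2 ^ n)) R)
      rw [smul_zero] at this
      rw [← this, Matrix.fromBlocks_one, Matrix.submatrix_smul]
      simp
    constructor
    · rw [hone, e]
      simp only [sus, Matrix.reindex_apply, Matrix.transpose_submatrix,
        Matrix.submatrix_mul_equiv, Matrix.fromBlocks_transpose, Matrix.fromBlocks_multiply]
      congr 2 <;> simp [h1, h2, smul_smul, add_smul, mul_comm, add_comm]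
    · rw [hone, e]
      simp only [sus, Matrix.reindex_apply, Matrix.transpose_submatrix,
        Matrix.submatrix_mul_equiv, Matrix.fromBlocks_transpose, Matrix.fromBlocks_multiply]
      congr 2 <;> simp [h1, h2, smul_smul, add_smul, mul_comm, add_comm]

theorem sus_add_bar (R : Type) [CommRing R] (n : ℕ) (v w : Fin (n + 1 + 1) → R) :
    sus R (n + 1) v w + (sus R (n + 1) w v)ᵀ = (v 0 + w 0) • 1 := by
  ext i j
  obtain ⟨i, rfl⟩ := (pow2Equiv n).surjective i
  obtain ⟨j, rfl⟩ := (pow2Equiv n).surjective j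
  rcases i with i | i <;> rcases j with j | j <;>
    simp [sus, Matrix.one_apply, eq_comm, add_comm] <;>
    split_ifs <;> simp

theorem sus_diag_entry (R : Type) [CommRing R] (n : ℕ) :
    ∃ i, ∀ v w : Fin (n + 1) → R, sus R n v w i i = v 0 := by
  cases n with
  | zero => exact ⟨0, fun v w => by simp [sus]⟩
  | succ n =>
    exact ⟨pow2Equiv n (Sum.inl ⟨0, by positivity⟩), fun v w => by simp [sus]⟩

theorem sus_off_entry (R : Type) [CommRing R] (n : ℕ) :
    ∃ i j, i ≠ j ∧ ∀ v w : Fin (n + 1 + 1) → R, sus R (n + 1) v w i j = v 1 := by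
  obtain ⟨i, hi⟩ := sus_diag_entry R n
  exact ⟨pow2Equiv n (Sum.inl i), pow2Equiv n (Sum.inr i), by simp,
    fun v w => by simp [sus, hi]⟩

theorem Jmat_mul_transpose (R : Type) [CommRing R] (n : ℕ) :
    Jmat R n * (Jmat R n)ᵀ = 1 := by
  induction n with
  | zero => simp [Jmat]
  | succ n ih =>
    rw [Jmat]
    split_ifs <;>
    simp [Matrix.fromBlocks_transpose, Matrix.fromBlocks_multiply, ih]

theorem invol_isUnit (R : Type) [CommRing R] (n : ℕ)
    (g : Matrix (Fin (2 ^ n)) (Fin (2 ^ n)) R) (hg : IsUnit g) : IsUnit (invol R n g) := by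
  have h1 := Jmat_mul_transpose R n
  have h2 := mul_eq_one_comm.mp h1
  have hJ : IsUnit (Jmat R n) := ⟨⟨_, _, h1, h2⟩, rfl⟩
  have hJt : IsUnit (Jmat R n)ᵀ := ⟨⟨_, _, h2, h1⟩, rfl⟩
  have hgt : IsUnit gᵀ := by
    rw [Matrix.isUnit_iff_isUnit_det, Matrix.det_transpose, ← Matrix.isUnit_iff_isUnit_det]
    exact hg
  exact (hJ.mul hgt).mul hJt

/-- The key relation: `(b - c e) S = d - c l` with `b` the polar form of `(TS, TI)`. -/
theorem key_relation (R : Type) [CommRing R] (n : ℕ)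
    (g h : Matrix (Fin (2 ^ (n + 1))) (Fin (2 ^ (n + 1))) R) (hh : IsUnit h)
    (v w v' w' u u' : Fin (n + 1 + 1) → R)
    (hS : g * sus R (n + 1) v w * h = sus R (n + 1) v' w')
    (hI : g * h = sus R (n + 1) u u') :
    (u ⬝ᵥ w' + v' ⬝ᵥ u' - (u ⬝ᵥ u') * (v 0 + w 0)) • sus R (n + 1) v w
      = (v' ⬝ᵥ w' - (u ⬝ᵥ u') * (v ⬝ᵥ w)) •
        (1 : Matrix (Fin (2 ^ (n + 1))) (Fin (2 ^ (n + 1))) R) := by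
  have hC := (sus_bar_mul R (n + 1) u u').1
  have hD := (sus_bar_mul R (n + 1) v' w').1
  have hsum := (sus_bar_mul R (n + 1) (u + v') (u' + w')).1
  have hl := (sus_bar_mul R (n + 1) v w).1
  have he := sus_add_bar R n v w
  rw [sus_add, sus_add, Matrix.transpose_add] at hsum
  rw [← hI] at hC hsum
  rw [← hS] at hD hsum
  generalize (sus R (n + 1) u' u)ᵀ = C at *
  generalize (sus R (n + 1) w' v')ᵀ = D at *
  generalize (sus R (n + 1) w v)ᵀ = B at *
  generalize sus R (n + 1) v w = S at *
  have hb : C * (g * S * h) + D * (g * h) = (u ⬝ᵥ w' + v' ⬝ᵥ u') • 1 := by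
    have : C * (g * S * h) + D * (g * h)
        = (C + D) * (g * h + g * S * h) - C * (g * h) - D * (g * S * h) := by noncomm_ring
    rw [this, hsum, hC, hD, ← sub_smul, ← sub_smul]
    congr 1
    simp only [add_dotProduct, dotProduct_add]
    ring
  have hP0 : h * C * g = (u ⬝ᵥ u') • 1 := by
    apply hh.mul_right_cancel
    calc h * C * g * h = h * (C * (g * h)) := by noncomm_ring
      _ = _ := by rw [hC]; simp
  have hP1 : h * C * g * S + h * D * g = (u ⬝ᵥ w' + v' ⬝ᵥ u') • 1 := by
    apply hh.mul_right_cancel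
    calc (h * C * g * S + h * D * g) * h = h * (C * (g * S * h) + D * (g * h)) := by noncomm_ring
      _ = _ := by rw [hb]; simp
  have hP2 : h * D * g * S = (v' ⬝ᵥ w') • 1 := by
    apply hh.mul_right_cancel
    calc h * D * g * S * h = h * (D * (g * S * h)) := by noncomm_ring
      _ = _ := by rw [hD]; simp
  have hSS : S * S = (v 0 + w 0) • S - (v ⬝ᵥ w) • 1 := by
    have : B = (v 0 + w 0) • 1 - S := by rw [← he]; abel
    rw [this] at hl
    rw [← hl]; simp [sub_mul]
  rw [hP0] at hP1
  have hP1' : h * D * g = (u ⬝ᵥ w' + v' ⬝ᵥ u') • 1 - (u ⬝ᵥ u') • S := by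
    rw [← hP1]; simp
  rw [hP1', sub_mul, smul_mul_assoc, smul_mul_assoc, hSS, one_mul] at hP2
  rw [sub_smul (v' ⬝ᵥ w'), ← hP2]
  module

/-- for odd `n ≥ 3` (here `n = m + 1`) and `g ∈ G_{n-1}(R)`, one has
`l(g·S·g*) = l(g·g*)·l(S)` for every Suslin matrix `S`. -/
theorem length_multiplicative (R : Type) [CommRing R] (m : ℕ) (hm : 2 ≤ m)
    (hodd : Odd (m + 1)) (g : Matrix (Fin (2 ^ m)) (Fin (2 ^ m)) R) (hg : g ∈ GSet R m)
    (v w v' w' u u' : Fin (m + 1) → R)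
    (hS : g * sus R m v w * invol R m g = sus R m v' w')
    (hI : g * invol R m g = sus R m u u') :
    v' ⬝ᵥ w' = (u ⬝ᵥ u') * (v ⬝ᵥ w) := by
  obtain ⟨n, rfl⟩ : ∃ n, m = n + 1 := ⟨m - 1, by omega⟩
  obtain ⟨hgu, hgS⟩ := hg
  have hh := invol_isUnit R (n + 1) g hgu
  obtain ⟨i, j, hij, hent⟩ := sus_off_entry R n
  set e : Fin (n + 1 + 1) → R := Pi.single 1 1 with he
  obtain ⟨p, q, hE⟩ := hgS (sus R (n + 1) e 0) ⟨e, 0, rfl⟩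
  have hSE : g * sus R (n + 1) (v + e) (w + 0) * invol R (n + 1) g
      = sus R (n + 1) (v' + p) (w' + q) := by
    rw [sus_add, sus_add, mul_add, add_mul, hS, hE]
  have k1 := key_relation R n g _ hh v w v' w' u u' hS hI
  have k2 := key_relation R n g _ hh e 0 p q u u' hE hI
  have k3 := key_relation R n g _ hh (v + e) (w + 0) (v' + p) (w' + q) u u' hSE hI
  have a1 := congrFun (congrFun k1 i) j
  have a2 := congrFun (congrFun k2 i) j
  have a3 := congrFun (congrFun k3 i) j
  have e1 : e 1 = 1 := by simp [he]
  simp only [Matrix.smul_apply, hent, Matrix.one_apply_ne hij, smul_eq_mul, mul_zero,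
    Pi.add_apply, Pi.zero_apply, e1, add_dotProduct, dotProduct_add] at a1 a2 a3
  have hf : u ⬝ᵥ w' + v' ⬝ᵥ u' - (u ⬝ᵥ u') * (v 0 + w 0) = 0 := by
    linear_combination a3 - a1 - (v 1 + 1) * a2
  have a4 := congrFun (congrFun k1 i) i
  rw [hf] at a4
  simp only [Matrix.smul_apply, Matrix.one_apply_eq, smul_eq_mul, mul_one, zero_mul] at a4
  linear_combination -a4
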